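/- Let α∈(0,1/2] and let F satisfy the regular right tail condition (with exponent α). Suppose there is a non-decreasing M∈ℛ_β with β∈[1−2α,1] such that, as x→∞, ω(x)≪x/M(x) and x/M(x)=o(ℓ(x)²). Let g₀(x)=ℓ(x)·√(M(x)/x). If there is γ>α+β such that g₀(x)≫(ln x)^γ, then for every θ>0 and every non-decreasing L∈ℛ with L(x)≪g₀(x)/(ln x)^γ, one has lim_{x→∞} (x/ℓ(x))·∑_{n<L(x)} sup_{t≥θx} F^{*n}((t,t+h]) = 0. -/

import Mathlib

open MeasureTheory Filter Set Real Asymptotics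

attribute [local instance] Classical.propDecidable

noncomputable section

namespace SRT

/-- Convolution of two measures on `ℝ`. -/
def mconv (μ ν : Measure ℝ) : Measure ℝ := μ.bind fun x => ν.map fun y => x + y

/-- `n`-fold self-convolution of `μ`, with the 0-th power the unit mass at `0`. -/
def convPow (μ : Measure ℝ) : ℕ → Measure ℝ
  | 0 => Measure.dirac 0
  | n + 1 => mconv (convPow μ n) μ

/-- The renewal measure `U = ∑ₙ F^{*n}`. -/
def renewal (μ : Measure ℝ) : Measure ℝ := Measure.sum fun n => convPow μ n

/-- Right tail `F̄(x) = μ((x,∞))`. -/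
def rtail (μ : Measure ℝ) (x : ℝ) : ℝ := (μ (Set.Ioi x)).toReal

/-- `f` is strictly positive on `(0,∞)` and regularly varying at `∞` with exponent `β`. -/
def RegVary (f : ℝ → ℝ) (β : ℝ) : Prop :=
  (∀ x > 0, 0 < f x) ∧
    ∀ c > 0, Tendsto (fun x => f (c * x) / f x) atTop (nhds (c ^ β))

/-- `f` is regularly varying at `∞` with some exponent. -/
def RegVaryAny (f : ℝ → ℝ) : Prop := ∃ β : ℝ, RegVary f β

/-- Regular right tail condition: `F̄(x) ∼ 1/ℓ(x)` as `x → ∞`. -/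
def RightTail (μ : Measure ℝ) (ℓ : ℝ → ℝ) : Prop :=
  Tendsto (fun x => rtail μ x * ℓ x) atTop (nhds 1)

/-- Converging tail ratio condition: `F(-x)/F̄(x)` converges to a finite limit. -/
def TailRatio (μ : Measure ℝ) : Prop :=
  ∃ p : ℝ, Tendsto (fun x => (μ (Set.Iic (-x))).toReal / rtail μ x) atTop (nhds p)

/-- `μ` is concentrated on `dℤ`. -/
def ConcOn (μ : Measure ℝ) (d : ℝ) : Prop := μ {x : ℝ | ∃ k : ℤ, x = k * d} = 1

/-- `μ` is arithmetic. -/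
def Arith (μ : Measure ℝ) : Prop := ∃ d > 0, ConcOn μ d

/-- `h` is admissible: any positive number if `μ` is non-arithmetic, and
the span of `μ` if `μ` is arithmetic. -/
def SpanOK (μ : Measure ℝ) (h : ℝ) : Prop :=
  0 < h ∧ (¬ Arith μ ∨ (ConcOn μ h ∧ ∀ d > 0, ConcOn μ d → d ≤ h))

/-- `μ` is concentrated on `a + dℤ`. -/
def ConcOnLat (μ : Measure ℝ) (a d : ℝ) : Prop :=
  μ {x : ℝ | ∃ k : ℤ, x = a + k * d} = 1

/-- `μ` is lattice. -/
def IsLattice (μ : Measure ℝ) : Prop := ∃ a d : ℝ, 0 ≤ a ∧ a < d ∧ ConcOnLat μ a d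

/-- `h` is admissible: any positive number if `μ` is non-lattice, and
the span of `μ` if `μ` is lattice. -/
def LatSpanOK (μ : Measure ℝ) (h : ℝ) : Prop :=
  0 < h ∧ (¬ IsLattice μ ∨
    ((∃ a, 0 ≤ a ∧ a < h ∧ ConcOnLat μ a h) ∧
      ∀ a d : ℝ, 0 ≤ a → a < d → ConcOnLat μ a d → d ≤ h))

/-- Generalized inverse `ℓ⁻(x) = inf {t ≥ 1 : ℓ(t) > x}`. -/
def linv (ℓ : ℝ → ℝ) (x : ℝ) : ℝ := sInf {t : ℝ | 1 ≤ t ∧ x < ℓ t}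

/-- `ω(x) = x F((x,x+h]) / F̄(x)`. -/
def omegaFn (μ : Measure ℝ) (h x : ℝ) : ℝ :=
  x * (μ (Set.Ioc x (x + h))).toReal / rtail μ x

/-- `I_η(x,T) = ∫_{(1-η)x}^x (ω(y)-T)⁺ dy`. -/
def Iof (μ : Measure ℝ) (h η x T : ℝ) : ℝ :=
  ∫ y in (1 - η) * x..x, max (omegaFn μ h y - T) 0

/-- `Î_{η,n,r}(x,T) = ∫_{(1-η)x}^x e^{-(x-y)/(r aₙ)} (ω(y)-T)⁺ dy`. -/
def IofHat (μ : Measure ℝ) (ℓ : ℝ → ℝ) (h η : ℝ) (n : ℕ) (r x T : ℝ) : ℝ :=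
  ∫ y in (1 - η) * x..x,
    Real.exp (-(x - y) / (r * linv ℓ (n : ℝ))) * max (omegaFn μ h y - T) 0

/-- `Sₙ/aₙ` converges in distribution to a law with density `g`. -/
def StableLimit (F : Measure ℝ) (ℓ : ℝ → ℝ) (g : ℝ → ℝ) : Prop :=
  ∀ f : BoundedContinuousFunction ℝ ℝ,
    Tendsto (fun n : ℕ =>
        ∫ x, f x ∂((convPow F n).map fun y => y / linv ℓ (n : ℝ))) atTop
      (nhds (∫ x, f x * g x))

/-- `Sₙ/aₙ` converges in distribution to the law `μζ`. -/
def WeakLimit (F : Measure ℝ) (ℓ : ℝ → ℝ) (μζ : Measure ℝ) : Prop :=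
  ∀ f : BoundedContinuousFunction ℝ ℝ,
    Tendsto (fun n : ℕ =>
        ∫ x, f x ∂((convPow F n).map fun y => y / linv ℓ (n : ℝ))) atTop
      (nhds (∫ x, f x ∂μζ))

/-- The law `μ` is stable: for each `n`, the `n`-fold convolution is the law of
`cₙ X + dₙ` for some `cₙ > 0`, `dₙ`. -/
def IsStable (μ : Measure ℝ) : Prop :=
  ∀ n : ℕ, 0 < n → ∃ c : ℝ, 0 < c ∧ ∃ d : ℝ, convPow μ n = μ.map fun x => c * x + d

/-- The strong renewal theorem:
`x F̄(x) U((x,x+h]) → α h ∫₀^∞ t^{-α} g(t) dt`. -/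
def SRTholds (F : Measure ℝ) (h α : ℝ) (g : ℝ → ℝ) : Prop :=
  Tendsto (fun x : ℝ => x * rtail F x * ((renewal F) (Set.Ioc x (x + h))).toReal)
    atTop (nhds (α * h * ∫ t in Set.Ioi (0:ℝ), t ^ (-α) * g t))

variable {Ω : Type*} [MeasurableSpace Ω]

/-- Partial sums `Sₙ = X₁ + ⋯ + Xₙ`. -/
def pSum (X : ℕ → Ω → ℝ) (n : ℕ) (ω : Ω) : ℝ := ∑ i ∈ Finset.range n, X i ω

/-- `X` is an i.i.d. sequence with common law `F` under `P`. -/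
def IIDseq (P : Measure Ω) (F : Measure ℝ) (X : ℕ → Ω → ℝ) : Prop :=
  (∀ i, Measurable (X i)) ∧ (∀ i, P.map (X i) = F) ∧
    ProbabilityTheory.iIndepFun X P

/-- `Nₙ = #{i ≤ n : Xᵢ > 0}`. -/
def Ncount (X : ℕ → Ω → ℝ) (n : ℕ) (ω : Ω) : ℕ :=
  ((Finset.range n).filter fun i => 0 < X i ω).card

/-- `Sₙ⁻ = ∑_{i ≤ n} Xᵢ⁻`. -/
def sMinus (X : ℕ → Ω → ℝ) (n : ℕ) (ω : Ω) : ℝ :=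
  ∑ i ∈ Finset.range n, max (-(X i ω)) 0

/-- The quantity `R_{T,η,r,c₁,c₂}(x,δ)` of Theorem `t:sum-small-n`, with
`xₙ = x + Sₙ⁻` and `κ = ⌊1/α⌋`. -/
def Rquant (F : Measure ℝ) (ℓ : ℝ → ℝ) (h α : ℝ) (P : Measure Ω) (X : ℕ → Ω → ℝ)
    (L : ℝ → ℝ) (T η r c₁ c₂ x δ : ℝ) : ℝ :=
  (x / ℓ x) * ∑ n ∈ Finset.Ico ⌈L x⌉₊ ⌈ℓ (δ * x)⌉₊,
    ∫ ω, ((Ncount X n ω : ℝ) / linv ℓ ((Ncount X n ω : ℕ) : ℝ)) *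
        (rtail F (x + sMinus X n ω) / (x + sMinus X n ω)) *
        sSup ((fun t => IofHat F ℓ h η (Ncount X n ω) r t T) ''
          Set.Icc (c₁ * (x + sMinus X n ω) / (⌊1/α⌋₊ : ℝ))
            (c₂ * (x + sMinus X n ω) + 2 * h)) ∂P

/-- Strict ascending ladder epochs. -/
def ladderTime (X : ℕ → Ω → ℝ) : ℕ → Ω → ℕ
  | 0 => fun _ => 0
  | k + 1 => fun ω =>
      sInf {n : ℕ | ladderTime X k ω < n ∧ pSum X (ladderTime X k ω) ω < pSum X n ω}

/-- Strict ascending ladder heights `H_k`. -/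
def ladderHeight (X : ℕ → Ω → ℝ) (k : ℕ) (ω : Ω) : ℝ := pSum X (ladderTime X k ω) ω

/-- Weak descending ladder epochs (weak ascending epochs of `-S`). -/
def wLadderTimeDesc (X : ℕ → Ω → ℝ) : ℕ → Ω → ℕ
  | 0 => fun _ => 0
  | k + 1 => fun ω =>
      sInf {n : ℕ | wLadderTimeDesc X k ω < n ∧
        pSum X n ω ≤ pSum X (wLadderTimeDesc X k ω) ω}

/-- Weak descending ladder heights (ladder heights of the walk `-S`). -/
def wLadderHeightDesc (X : ℕ → Ω → ℝ) (k : ℕ) (ω : Ω) : ℝ :=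
  - pSum X (wLadderTimeDesc X k ω) ω

/-- `X_{n:k}`, the `k`-th largest among `X₁,…,Xₙ`; by convention `0` if `k > n`. -/
def ordStat (X : ℕ → Ω → ℝ) (n k : ℕ) (ω : Ω) : ℝ :=
  sSup {t : ℝ | k ≤ ((Finset.range n).filter fun i => t ≤ X i ω).card}

/-- `S_{n:k} = X_{n:1} + ⋯ + X_{n:k}`. -/
def topSum (X : ℕ → Ω → ℝ) (n k : ℕ) (ω : Ω) : ℝ :=
  ∑ j ∈ Finset.Icc 1 k, ordStat X n j ω

/-- `ζ_{n,x} = aₙ^{1-γ} x^γ`. -/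
def zetaCut (ℓ : ℝ → ℝ) (γ : ℝ) (n : ℕ) (x : ℝ) : ℝ :=
  (linv ℓ (n : ℝ)) ^ (1 - γ) * x ^ γ

/-- The event `E_{n,k,x} = {Sₙ ∈ (x,x+h], X_{n:k} > ζ_{n,x} ≥ X_{n:k+1}}`,
with the convention `X_{n:0} = ∞`. -/
def Eevent (X : ℕ → Ω → ℝ) (ℓ : ℝ → ℝ) (h γ : ℝ) (n k : ℕ) (x : ℝ) : Set Ω :=
  {ω | pSum X n ω ∈ Set.Ioc x (x + h) ∧
    (k = 0 ∨ zetaCut ℓ γ n x < ordStat X n k ω) ∧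
    ordStat X n (k + 1) ω ≤ zetaCut ℓ γ n x}

end SRT

open SRT

/-!
Truncate the summands at `z = x / log x`. Peeling off one summand at a time, `F^{*n}((t, t + h])`
is at most `n` times the largest mass of a window inside `(z, ∞)`, plus the exponential Markov
bound `exp (-2 t / (θ z))` times the `n`-th power of the truncated moment generating function. The
hypothesis on `ω` and Potter's bounds make the window mass `≪ (log x)^γ F̄(x) / M(x)` and the
moment generating function `exp (O((log x)^γ F̄(x)))`. Covering `(x, 2x]` by windows also gives
`M(x) ≪ x`, so that `n < L(x) ≪ ℓ(x) / (log x)^γ` keeps the `n`-th power bounded; the Markov term is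
then `≪ x⁻²` for `t ≥ θ x`, and summing `n` over `n < L(x)` costs only
`L(x)² (log x)^γ F̄(x) / M(x) ≪ (ℓ(x) / x) (log x)^{-γ}`.
-/

namespace SRT

section RegularVariation

variable {f g : ℝ → ℝ} {a b : ℝ}

lemma RegVary.mul (hf : RegVary f a) (hg : RegVary g b) :
    RegVary (fun x => f x * g x) (a + b) := by
  refine ⟨fun x hx => mul_pos (hf.1 x hx) (hg.1 x hx), fun c hc => ?_⟩
  rw [Real.rpow_add hc]
  exact ((hf.2 c hc).mul (hg.2 c hc)).congr fun x => div_mul_div_comm _ _ _ _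

lemma RegVary.of_tendsto_div {k : ℝ} (hf : RegVary f a) (hg : ∀ x > 0, 0 < g x) (hk : k ≠ 0)
    (hgf : Tendsto (fun x => g x / f x) atTop (nhds k)) : RegVary g a := by
  refine ⟨hg, fun c hc => ?_⟩
  have hgf_scaled := hgf.comp (tendsto_id.const_mul_atTop hc)
  have hlim := (hgf_scaled.div hgf hk).mul (hf.2 c hc)
  rw [div_self hk, one_mul] at hlim
  refine hlim.congr' ?_
  filter_upwards [eventually_gt_atTop 0] with x hx
  have hfx := (hf.1 x hx).ne'
  have hfcx := (hf.1 (c * x) (by positivity)).ne'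
  have hgx := (hg x hx).ne'
  simp only [Function.comp_apply, id_eq, Pi.div_apply]
  field_simp

lemma RegVary.exponent_nonneg (hf : RegVary f a) (hmono : MonotoneOn f (Ioi 0)) : 0 ≤ a := by
  have hone_le : (1 : ℝ) ≤ 2 ^ a := by
    refine ge_of_tendsto (hf.2 2 two_pos) ?_
    filter_upwards [eventually_gt_atTop 0] with x hx
    rw [one_le_div (hf.1 x hx)]
    exact hmono hx (show (0 : ℝ) < 2 * x by positivity) (by linarith)
  by_contra! ha
  exact hone_le.not_gt (Real.rpow_lt_one_of_one_lt_of_neg one_lt_two ha)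

lemma le_two_pow_rpow_mul_of_le_doubling {ρ y : ℝ} (hy : 0 < y)
    (hdouble : ∀ x ≥ y, f (2 * x) ≤ 2 ^ ρ * f x) (k : ℕ) :
    f (2 ^ k * y) ≤ ((2 : ℝ) ^ k) ^ ρ * f y := by
  induction k with
  | zero => simp
  | succ k ih =>
    have hy_le : y ≤ 2 ^ k * y := le_mul_of_one_le_left hy.le (one_le_pow₀ one_le_two)
    calc f (2 ^ (k + 1) * y) = f (2 * (2 ^ k * y)) := by ring_nf
      _ ≤ 2 ^ ρ * f (2 ^ k * y) := hdouble _ hy_le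
      _ ≤ 2 ^ ρ * (((2 : ℝ) ^ k) ^ ρ * f y) := by gcongr
      _ = ((2 : ℝ) ^ (k + 1)) ^ ρ * f y := by
        rw [pow_succ', Real.mul_rpow two_pos.le (by positivity), mul_assoc]

/-- Potter's bound; monotonicity lets the doubling ratio alone control all ratios. -/
theorem RegVary.potter_bound {ρ : ℝ} (hf : RegVary f a) (hmono : MonotoneOn f (Ioi 0))
    (haρ : a < ρ) :
    ∃ C > 0, ∀ᶠ y in atTop, ∀ x ≥ y, f x ≤ C * (x / y) ^ ρ * f y := by
  have hρ : 0 ≤ ρ := (hf.exponent_nonneg hmono).trans haρ.le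
  have hlt : (2 : ℝ) ^ a < 2 ^ ρ := Real.rpow_lt_rpow_of_exponent_lt one_lt_two haρ
  have hratio := eventually_forall_ge_atTop.2 ((hf.2 2 two_pos).eventually (gt_mem_nhds hlt))
  refine ⟨2 ^ ρ, by positivity, ?_⟩
  filter_upwards [hratio, eventually_gt_atTop 0] with y hy hy0 x hyx
  have hdouble : ∀ w ≥ y, f (2 * w) ≤ 2 ^ ρ * f w := fun w hw =>
    ((div_lt_iff₀ (hf.1 w (hy0.trans_le hw))).1 (hy w hw)).le
  obtain ⟨k, hk_le, hk_lt⟩ := exists_nat_pow_near ((one_le_div hy0).2 hyx) one_lt_two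
  have hx0 : 0 < x := hy0.trans_le hyx
  have hfy := (hf.1 y hy0).le
  calc f x ≤ f (2 ^ (k + 1) * y) :=
        hmono hx0 (show (0 : ℝ) < _ by positivity) ((div_lt_iff₀ hy0).1 hk_lt).le
    _ ≤ ((2 : ℝ) ^ (k + 1)) ^ ρ * f y := le_two_pow_rpow_mul_of_le_doubling hy0 hdouble _
    _ ≤ (2 * (x / y)) ^ ρ * f y := by
        rw [pow_succ']
        gcongr
    _ = 2 ^ ρ * (x / y) ^ ρ * f y := by
        rw [Real.mul_rpow two_pos.le (by positivity)]

end RegularVariation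

section Convolution

lemma mconv_eq_conv (μ ν : Measure ℝ) [SFinite ν] : mconv μ ν = μ ∗ ν := by
  have hmap : ∀ x, ν.map (x + ·) = (ν.map (Prod.mk x)).map fun q => q.1 + q.2 := fun x => by
    rw [Measure.map_map measurable_add measurable_prodMk_left]; rfl
  have hmeas : Measurable fun x : ℝ => ν.map (x + ·) := by
    simp only [hmap]
    exact (Measure.measurable_map _ measurable_add).comp Measurable.map_prodMk_left
  refine Measure.ext_of_lintegral _ fun f hf => ?_
  rw [mconv, Measure.lintegral_bind hmeas.aemeasurable hf.aemeasurable, Measure.lintegral_conv hf]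
  exact lintegral_congr fun x => lintegral_map hf (measurable_const_add x)

lemma convPow_succ (F : Measure ℝ) [SFinite F] (n : ℕ) : convPow F (n + 1) = convPow F n ∗ F :=
  mconv_eq_conv _ _

instance isProbabilityMeasure_convPow (F : Measure ℝ) [IsProbabilityMeasure F] (n : ℕ) :
    IsProbabilityMeasure (convPow F n) := by
  induction n with
  | zero => exact Measure.dirac.isProbabilityMeasure
  | succ n ih => rw [convPow_succ]; infer_instance

lemma conv_apply_Ioc (μ ν : Measure ℝ) [SFinite ν] (t h : ℝ) :
    (μ ∗ ν) (Ioc t (t + h)) = ∫⁻ x, ν (Ioc (t - x) (t - x + h)) ∂μ := by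
  rw [Measure.conv, Measure.map_apply measurable_add measurableSet_Ioc,
    Measure.prod_apply (measurable_add measurableSet_Ioc)]
  refine lintegral_congr fun x => congrArg ν ?_
  rw [sub_add_eq_add_sub, ← preimage_const_add_Ioc]
  rfl

lemma conv_apply_Ioc_le (μ ν : Measure ℝ) [IsProbabilityMeasure μ] [SFinite ν] {h : ℝ}
    {p : ENNReal} (hp : ∀ s, ν (Ioc s (s + h)) ≤ p) (t : ℝ) : (μ ∗ ν) (Ioc t (t + h)) ≤ p :=
  calc (μ ∗ ν) (Ioc t (t + h)) = ∫⁻ x, ν (Ioc (t - x) (t - x + h)) ∂μ := conv_apply_Ioc μ ν t h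
    _ ≤ ∫⁻ _, p ∂μ := lintegral_mono fun x => hp (t - x)
    _ = p := by simp

lemma conv_eq_restrict_Iic_conv_add (μ ν : Measure ℝ) [SFinite μ] [SFinite ν] (z : ℝ) :
    μ ∗ ν = ν.restrict (Iic z) ∗ μ + μ ∗ ν.restrict (Ioi z) := by
  rw [Measure.conv_comm (ν.restrict (Iic z)), ← Measure.conv_add, ← compl_Iic,
    Measure.restrict_add_restrict_compl measurableSet_Iic]

/-- Moment generating function at `lam` of `F` truncated to `(-∞, z]`: the cost per summand of the
exponential Markov inequality. It is `ℝ≥0∞`-valued to spare integrability side conditions. -/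
def truncMgf (F : Measure ℝ) (lam z : ℝ) : ENNReal :=
  ∫⁻ y in Iic z, ENNReal.ofReal (Real.exp (lam * y)) ∂F

variable (F : Measure ℝ) [IsProbabilityMeasure F]

lemma conv_restrict_Iic_apply_Ioc_le (μ : Measure ℝ) [SFinite μ] {h lam z : ℝ} {a b : ENNReal}
    (hμ : ∀ t, μ (Ioc t (t + h)) ≤ a + b * ENNReal.ofReal (Real.exp (-(lam * t)))) (t : ℝ) :
    (F.restrict (Iic z) ∗ μ) (Ioc t (t + h)) ≤
      a + b * ENNReal.ofReal (Real.exp (-(lam * t))) * truncMgf F lam z := by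
  have hexp (y : ℝ) : ENNReal.ofReal (Real.exp (-(lam * (t - y)))) =
      ENNReal.ofReal (Real.exp (-(lam * t))) * ENNReal.ofReal (Real.exp (lam * y)) := by
    rw [← ENNReal.ofReal_mul (Real.exp_pos _).le, ← Real.exp_add]
    ring_nf
  calc (F.restrict (Iic z) ∗ μ) (Ioc t (t + h))
      = ∫⁻ y in Iic z, μ (Ioc (t - y) (t - y + h)) ∂F := conv_apply_Ioc _ _ _ _
    _ ≤ ∫⁻ y in Iic z, (a + b * ENNReal.ofReal (Real.exp (-(lam * t))) *
          ENNReal.ofReal (Real.exp (lam * y))) ∂F :=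
        lintegral_mono fun y => (hμ (t - y)).trans_eq (by rw [hexp, mul_assoc])
    _ = a * F (Iic z) + b * ENNReal.ofReal (Real.exp (-(lam * t))) * truncMgf F lam z := by
        rw [lintegral_add_left measurable_const, setLIntegral_const,
          lintegral_const_mul _ (by fun_prop), truncMgf]
    _ ≤ a + b * ENNReal.ofReal (Real.exp (-(lam * t))) * truncMgf F lam z := by
        gcongr
        exact mul_le_of_le_one_right zero_le prob_le_one

/-- The last summand either exceeds `z`, and then lands in a window of mass at most `p`, or is
truncated at `z` and costs one factor of the exponential Markov inequality. -/
theorem convPow_Ioc_le {h z lam : ℝ} (hlam : 0 ≤ lam) {p : ENNReal}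
    (hp : ∀ s, F.restrict (Ioi z) (Ioc s (s + h)) ≤ p) (n : ℕ) (t : ℝ) :
    convPow F n (Ioc t (t + h)) ≤
      n * p + truncMgf F lam z ^ n * ENNReal.ofReal (Real.exp (-(lam * t))) := by
  induction n generalizing t with
  | zero =>
    rw [convPow, Nat.cast_zero, zero_mul, zero_add, pow_zero, one_mul]
    rcases lt_or_ge t 0 with ht | ht
    · refine prob_le_one.trans (ENNReal.one_le_ofReal.2 (Real.one_le_exp ?_))
      exact neg_nonneg.2 (mul_nonpos_of_nonneg_of_nonpos hlam ht.le)
    · rw [Measure.dirac_apply' _ measurableSet_Ioc, indicator_of_notMem (by simp [ht])]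
      exact zero_le
  | succ n ih =>
    calc convPow F (n + 1) (Ioc t (t + h))
        = (F.restrict (Iic z) ∗ convPow F n) (Ioc t (t + h)) +
            (convPow F n ∗ F.restrict (Ioi z)) (Ioc t (t + h)) := by
          rw [convPow_succ, conv_eq_restrict_Iic_conv_add _ F z, Measure.add_apply]
      _ ≤ (n * p + truncMgf F lam z ^ n * ENNReal.ofReal (Real.exp (-(lam * t))) *
            truncMgf F lam z) + p :=
          add_le_add (conv_restrict_Iic_apply_Ioc_le F _ ih t) (conv_apply_Ioc_le _ _ hp t)
      _ = (n + 1 : ℕ) * p +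
            truncMgf F lam z ^ (n + 1) * ENNReal.ofReal (Real.exp (-(lam * t))) := by
          push_cast
          ring

end Convolution

section TruncatedMgf

lemma ofReal_exp_mul_le {lam y z : ℝ} (hlam : 0 ≤ lam) (hyz : y ≤ z) :
    ENNReal.ofReal (Real.exp (lam * y)) ≤
      1 + ENNReal.ofReal (lam * Real.exp (lam * z)) * ENNReal.ofReal y := by
  rcases le_total y 0 with hy | hy
  · rw [ENNReal.ofReal_of_nonpos hy, mul_zero, add_zero, ENNReal.ofReal_le_one]
    exact Real.exp_le_one_iff.2 (mul_nonpos_of_nonneg_of_nonpos hlam hy)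
  · rw [← ENNReal.ofReal_mul (by positivity), ← ENNReal.ofReal_one,
      ← ENNReal.ofReal_add one_pos.le (by positivity)]
    refine ENNReal.ofReal_le_ofReal ?_
    have hexp_mul : Real.exp (lam * y) * Real.exp (-(lam * y)) = 1 := by
      rw [← Real.exp_add, add_neg_cancel, Real.exp_zero]
    calc Real.exp (lam * y)
        = 1 + Real.exp (lam * y) * (1 - Real.exp (-(lam * y))) := by rw [mul_sub, hexp_mul]; ring
      _ ≤ 1 + Real.exp (lam * y) * (lam * y) := by
          gcongr
          exact sub_le_comm.1 (Real.one_sub_le_exp_neg _)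
      _ ≤ 1 + Real.exp (lam * z) * (lam * y) := by gcongr
      _ = 1 + lam * Real.exp (lam * z) * y := by ring

lemma setLIntegral_Iic_ofReal_le (μ : Measure ℝ) (z : ℝ) :
    ∫⁻ y in Iic z, ENNReal.ofReal y ∂μ ≤ ∫⁻ t in Ioc 0 z, μ (Ioi t) := by
  have hlayer := lintegral_eq_lintegral_meas_lt (μ.restrict (Iic z)) (f := fun y => max y 0)
    (ae_of_all _ fun y => le_max_right y 0) (by fun_prop)
  simp only [ENNReal.ofReal_max, ENNReal.ofReal_zero, zero_le, max_eq_left] at hlayer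
  have hpoint : ∀ t ∈ Ioi (0 : ℝ), μ.restrict (Iic z) {y | t < max y 0} ≤
      (Ioc 0 z).indicator (fun t => μ (Ioi t)) t := fun t ht => by
    have hlevel : {y | t < max y 0} = Ioi t := by
      ext y
      simp [not_lt.2 (mem_Ioi.1 ht).le]
    rw [hlevel, Measure.restrict_apply measurableSet_Ioi, Ioi_inter_Iic]
    by_cases htz : t ≤ z
    · rw [indicator_of_mem (show t ∈ Ioc 0 z from ⟨ht, htz⟩)]
      exact measure_mono Ioc_subset_Ioi_self
    · simp [Ioc_eq_empty_of_le (not_le.1 htz).le]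
  calc ∫⁻ y in Iic z, ENNReal.ofReal y ∂μ
      ≤ ∫⁻ t in Ioi 0, (Ioc 0 z).indicator (fun t => μ (Ioi t)) t :=
        hlayer.trans_le (setLIntegral_mono' measurableSet_Ioi hpoint)
    _ = ∫⁻ t in Ioc 0 z, μ (Ioi t) := by
        rw [setLIntegral_indicator measurableSet_Ioc, inter_eq_left.2 Ioc_subset_Ioi_self]

lemma setLIntegral_Ioc_div_rpow {z ρ : ℝ} (hz : 0 < z) (hρ : ρ < 1) :
    ∫⁻ t in Ioc 0 z, ENNReal.ofReal ((z / t) ^ ρ) = ENNReal.ofReal (z / (1 - ρ)) := by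
  have hrpow : ∀ t ∈ Ioc 0 z, (z / t) ^ ρ = z ^ ρ * t ^ (-ρ) := fun t ht => by
    rw [Real.div_rpow hz.le ht.1.le, Real.rpow_neg ht.1.le, div_eq_mul_inv]
  have hint : IntegrableOn (fun t => z ^ ρ * t ^ (-ρ)) (Ioc 0 z) :=
    ((intervalIntegrable_iff_integrableOn_Ioc_of_le hz.le).1
      (intervalIntegral.intervalIntegrable_rpow' (by linarith))).const_mul _
  have hnonneg : 0 ≤ᵐ[volume.restrict (Ioc 0 z)] fun t => z ^ ρ * t ^ (-ρ) :=
    ae_restrict_of_forall_mem measurableSet_Ioc fun t ht =>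
      mul_nonneg (Real.rpow_nonneg hz.le _) (Real.rpow_nonneg ht.1.le _)
  rw [setLIntegral_congr_fun measurableSet_Ioc fun t ht => congrArg _ (hrpow t ht),
    ← ofReal_integral_eq_lintegral_ofReal hint hnonneg, integral_const_mul,
    ← intervalIntegral.integral_of_le hz.le, integral_rpow (Or.inl (by linarith)),
    Real.zero_rpow (by linarith), sub_zero, mul_div_assoc', ← Real.rpow_add hz]
  congr 2 <;> ring_nf
  exact Real.rpow_one z

lemma setLIntegral_Iic_ofReal_le_of_rtail_le (F : Measure ℝ) [IsFiniteMeasure F] {z ρ A : ℝ}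
    (hz : 0 < z) (hρ : ρ < 1) (hA : 0 ≤ A) (htail : ∀ y ∈ Ioc 0 z, rtail F y ≤ A * (z / y) ^ ρ) :
    ∫⁻ y in Iic z, ENNReal.ofReal y ∂F ≤ ENNReal.ofReal (A * (z / (1 - ρ))) := by
  have htail' : ∀ t ∈ Ioc 0 z, F (Ioi t) ≤ ENNReal.ofReal A * ENNReal.ofReal ((z / t) ^ ρ) :=
    fun t ht => by
      rw [← ENNReal.ofReal_mul hA, ← ofReal_measureReal]
      exact ENNReal.ofReal_le_ofReal (htail t ht)
  calc ∫⁻ y in Iic z, ENNReal.ofReal y ∂F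
      ≤ ∫⁻ t in Ioc 0 z, F (Ioi t) := setLIntegral_Iic_ofReal_le F z
    _ ≤ ∫⁻ t in Ioc 0 z, ENNReal.ofReal A * ENNReal.ofReal ((z / t) ^ ρ) :=
        setLIntegral_mono' measurableSet_Ioc htail'
    _ = ENNReal.ofReal (A * (z / (1 - ρ))) := by
        rw [lintegral_const_mul' _ _ ENNReal.ofReal_ne_top, setLIntegral_Ioc_div_rpow hz hρ,
          ENNReal.ofReal_mul hA]

theorem truncMgf_le_of_rtail_le (F : Measure ℝ) [IsProbabilityMeasure F] {lam z ρ A : ℝ}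
    (hlam : 0 ≤ lam) (hz : 0 < z) (hρ : ρ < 1) (hA : 0 ≤ A)
    (htail : ∀ y ∈ Ioc 0 z, rtail F y ≤ A * (z / y) ^ ρ) :
    truncMgf F lam z ≤
      ENNReal.ofReal (Real.exp (lam * z * Real.exp (lam * z) / (1 - ρ) * A)) := by
  have := sub_pos.2 hρ
  calc truncMgf F lam z
      ≤ ∫⁻ y in Iic z, (1 + ENNReal.ofReal (lam * Real.exp (lam * z)) * ENNReal.ofReal y) ∂F :=
        setLIntegral_mono' measurableSet_Iic fun y hy => ofReal_exp_mul_le hlam hy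
    _ = F (Iic z) + ENNReal.ofReal (lam * Real.exp (lam * z)) *
          ∫⁻ y in Iic z, ENNReal.ofReal y ∂F := by
        rw [lintegral_add_left measurable_const, setLIntegral_one,
          lintegral_const_mul' _ _ ENNReal.ofReal_ne_top]
    _ ≤ ENNReal.ofReal 1 + ENNReal.ofReal (lam * Real.exp (lam * z)) *
          ENNReal.ofReal (A * (z / (1 - ρ))) := by
        rw [ENNReal.ofReal_one]
        gcongr
        · exact prob_le_one
        · exact setLIntegral_Iic_ofReal_le_of_rtail_le F hz hρ hA htail
    _ = ENNReal.ofReal (lam * z * Real.exp (lam * z) / (1 - ρ) * A + 1) := by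
        rw [← ENNReal.ofReal_mul (by positivity),
          ← ENNReal.ofReal_add one_pos.le (by positivity)]
        ring_nf
    _ ≤ ENNReal.ofReal (Real.exp (lam * z * Real.exp (lam * z) / (1 - ρ) * A)) :=
        ENNReal.ofReal_le_ofReal (Real.add_one_le_exp _)

end TruncatedMgf

section RightTail

variable {F : Measure ℝ} {ℓ : ℝ → ℝ} {α : ℝ}

lemma rtail_antitone (F : Measure ℝ) [IsFiniteMeasure F] : Antitone (rtail F) :=
  fun _ _ hxy => measureReal_mono (Ioi_subset_Ioi hxy)

lemma rtail_le_one (F : Measure ℝ) [IsProbabilityMeasure F] (x : ℝ) : rtail F x ≤ 1 :=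
  measureReal_le_one

lemma RightTail.rtail_pos [IsFiniteMeasure F] (hRT : RightTail F ℓ) (x : ℝ) : 0 < rtail F x := by
  obtain ⟨y, hy, hxy⟩ :=
    ((hRT.eventually (lt_mem_nhds one_pos)).and (eventually_ge_atTop x)).exists
  have hFy : rtail F y ≠ 0 := left_ne_zero_of_mul hy.ne'
  exact (lt_of_le_of_ne ENNReal.toReal_nonneg hFy.symm).trans_le (rtail_antitone F hxy)

lemma RightTail.regVary_inv_rtail [IsFiniteMeasure F] (hRT : RightTail F ℓ)
    (hℓ : RegVary ℓ α) : RegVary (fun x => (rtail F x)⁻¹) α := by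
  refine hℓ.of_tendsto_div (fun x _ => inv_pos.2 (hRT.rtail_pos x)) one_ne_zero ?_
  simpa [div_eq_mul_inv, mul_comm] using Tendsto.inv₀ hRT one_ne_zero

lemma RegVary.rtail_pos (hF : RegVary (fun x => (rtail F x)⁻¹) α) {x : ℝ} (hx : 0 < x) :
    0 < rtail F x :=
  inv_pos.1 (hF.1 x hx)

lemma RegVary.monotoneOn_inv_rtail [IsFiniteMeasure F]
    (hF : RegVary (fun x => (rtail F x)⁻¹) α) :
    MonotoneOn (fun x => (rtail F x)⁻¹) (Ioi 0) :=
  fun _ _ _ hy hxy => inv_anti₀ (hF.rtail_pos hy) (rtail_antitone F hxy)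

lemma RegVary.rtail_potter_bound [IsFiniteMeasure F]
    (hF : RegVary (fun x => (rtail F x)⁻¹) α) {ρ : ℝ} (hαρ : α < ρ) :
    ∃ C > 0, ∀ᶠ y in atTop, ∀ z ≥ y, rtail F y ≤ C * rtail F z * (z / y) ^ ρ := by
  obtain ⟨C, hC, hev⟩ := hF.potter_bound hF.monotoneOn_inv_rtail hαρ
  refine ⟨C, hC, ?_⟩
  filter_upwards [hev, eventually_gt_atTop 0] with y hy hy0 z hyz
  have hpotter := hy z hyz
  rw [← div_eq_mul_inv, le_div_iff₀ (hF.rtail_pos hy0),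
    inv_mul_le_iff₀ (hF.rtail_pos (hy0.trans_le hyz))] at hpotter
  linarith

/-- Unlike in Potter's bound, `y` ranges over all of `(0, z]`: below the Potter threshold `X` one
uses `F̄(y) ≤ 1 = F̄(X) / F̄(X)`. -/
theorem RegVary.rtail_le_mul_rpow [IsProbabilityMeasure F]
    (hF : RegVary (fun x => (rtail F x)⁻¹) α) {ρ : ℝ} (hαρ : α < ρ) :
    ∃ C > 0, ∀ᶠ z in atTop, ∀ y ∈ Ioc 0 z, rtail F y ≤ C * rtail F z * (z / y) ^ ρ := by
  have hρ : 0 ≤ ρ := (hF.exponent_nonneg hF.monotoneOn_inv_rtail).trans hαρ.le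
  obtain ⟨C, hC, hev⟩ := hF.rtail_potter_bound hαρ
  obtain ⟨X, hX, hX0⟩ :=
    ((eventually_forall_ge_atTop.2 hev).and (eventually_gt_atTop 0)).exists
  have hFX := hF.rtail_pos hX0
  have hone_le : 1 ≤ (rtail F X)⁻¹ := (one_le_inv₀ hFX).2 (rtail_le_one F X)
  refine ⟨C * (rtail F X)⁻¹, by positivity, ?_⟩
  filter_upwards [eventually_ge_atTop X] with z hXz y ⟨hy, hyz⟩
  have hFz := hF.rtail_pos (hX0.trans_le hXz)
  rcases le_total X y with hXy | hyX
  · refine (hX y hXy z hyz).trans ?_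
    have : 0 ≤ z / y := div_nonneg (hy.trans_le hyz).le hy.le
    gcongr
    exact le_mul_of_one_le_right hC.le hone_le
  · calc rtail F y ≤ (rtail F X)⁻¹ * rtail F X := by
          rw [inv_mul_cancel₀ hFX.ne']
          exact rtail_le_one F y
      _ ≤ (rtail F X)⁻¹ * (C * rtail F z * (z / X) ^ ρ) := by
          gcongr
          exact hX X le_rfl z hXz
      _ ≤ (rtail F X)⁻¹ * (C * rtail F z * (z / y) ^ ρ) := by
          have : 0 ≤ z / X := div_nonneg (hX0.trans_le hXz).le hX0.le
          gcongr
          exact (hy.trans_le hyz).le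
      _ = C * (rtail F X)⁻¹ * rtail F z * (z / y) ^ ρ := by ring

lemma RegVary.mul_rtail_le_measureReal_Ioc [IsFiniteMeasure F]
    (hF : RegVary (fun x => (rtail F x)⁻¹) α) (hα : 0 < α) :
    ∃ c > 0, ∀ᶠ x in atTop, c * rtail F x ≤ F.real (Ioc x (2 * x)) := by
  obtain ⟨b, hb, hb_lt⟩ := exists_between (Real.one_lt_rpow one_lt_two hα)
  have hb0 : 0 < b := one_pos.trans hb
  refine ⟨1 - b⁻¹, sub_pos.2 (inv_lt_one_of_one_lt₀ hb), ?_⟩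
  filter_upwards [(hF.2 2 two_pos).eventually (lt_mem_nhds hb_lt), eventually_gt_atTop 0]
    with x hratio hx
  have hFx := hF.rtail_pos hx
  have hF2x := hF.rtail_pos (mul_pos two_pos hx)
  have hdouble : rtail F (2 * x) ≤ b⁻¹ * rtail F x := by
    rw [inv_div_inv, lt_div_iff₀ hF2x] at hratio
    exact (le_inv_mul_iff₀ hb0).2 hratio.le
  have hunion : rtail F x = F.real (Ioc x (2 * x)) + rtail F (2 * x) := by
    rw [rtail, rtail, ← Ioc_union_Ioi_eq_Ioi (show x ≤ 2 * x by linarith)]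
    exact measureReal_union (Ioc_disjoint_Ioi le_rfl) measurableSet_Ioi
  linarith

end RightTail

section Window

variable {F : Measure ℝ} {f : ℝ → ℝ} {h α : ℝ}

lemma isBigO_window {M : ℝ → ℝ} (hF : ∀ x > 0, 0 < rtail F x)
    (hω : (fun x => omegaFn F h x) =O[atTop] fun x => x / M x) :
    (fun x => F.real (Ioc x (x + h))) =O[atTop] fun x => (M x * (rtail F x)⁻¹)⁻¹ := by
  refine (hω.mul (isBigO_refl (fun x => rtail F x / x) atTop)).congr' ?_ ?_
  all_goals
    filter_upwards [eventually_gt_atTop 0] with x hx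
    have := (hF x hx).ne'
  · rw [omegaFn, measureReal_def]
    field_simp
  · rw [mul_inv, inv_inv]
    field_simp

lemma measureReal_Ioc_add_mul_le (F : Measure ℝ) {x B : ℝ} (hh : 0 ≤ h)
    (hB : ∀ s ≥ x, F.real (Ioc s (s + h)) ≤ B) (N : ℕ) :
    F.real (Ioc x (x + N * h)) ≤ N * B := by
  induction N with
  | zero => simp
  | succ N ih =>
    have hNh : 0 ≤ N * h := by positivity
    have hsucc : x + (N + 1 : ℕ) * h = x + N * h + h := by push_cast; ring
    rw [hsucc, ← Ioc_union_Ioc_eq_Ioc (b := x + N * h) (by linarith) (by linarith)]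
    refine (measureReal_union_le _ _).trans ((add_le_add ih (hB _ (by linarith))).trans_eq ?_)
    push_cast
    ring

theorem isBigO_mul_rtail_of_window [IsFiniteMeasure F] (hh : 0 < h) (hα : 0 < α)
    (hF : RegVary (fun x => (rtail F x)⁻¹) α) (hf : ∀ x > 0, 0 < f x)
    (hmono : MonotoneOn f (Ioi 0))
    (hwin : (fun x => F.real (Ioc x (x + h))) =O[atTop] fun x => (f x)⁻¹) :
    (fun x => f x * rtail F x) =O[atTop] fun x => x := by
  obtain ⟨C, hC, hCwin⟩ := hwin.exists_pos
  obtain ⟨c, hc, hdrop⟩ := hF.mul_rtail_le_measureReal_Ioc hα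
  refine IsBigO.of_bound (c⁻¹ * ((1 / h + 1) * C)) ?_
  filter_upwards [hdrop, eventually_forall_ge_atTop.2 hCwin.bound, eventually_ge_atTop 1]
    with x hdropx hCx hx
  have hx0 : 0 < x := one_pos.trans_le hx
  have hfx := hf x hx0
  have hFx := hF.rtail_pos hx0
  have hwindow : ∀ s ≥ x, F.real (Ioc s (s + h)) ≤ C * (f x)⁻¹ := fun s hs => by
    have hfs := hf s (hx0.trans_le hs)
    have hCs := (Real.le_norm_self _).trans (hCx s hs)
    rw [Real.norm_of_nonneg (inv_pos.2 hfs).le] at hCs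
    refine hCs.trans ?_
    gcongr
    exact hmono hx0 (hx0.trans_le hs) hs
  have hcover : Ioc x (2 * x) ⊆ Ioc x (x + ⌈x / h⌉₊ * h) := by
    refine Ioc_subset_Ioc_right ?_
    linarith [(div_le_iff₀ hh).1 (Nat.le_ceil (x / h))]
  have hceil : (⌈x / h⌉₊ : ℝ) ≤ (1 / h + 1) * x := by
    refine (Nat.ceil_lt_add_one (by positivity)).le.trans ?_
    rw [add_mul, one_div_mul_eq_div, one_mul]
    gcongr
  have hdrop_le : c * rtail F x ≤ (1 / h + 1) * x * (C * (f x)⁻¹) :=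
    calc c * rtail F x ≤ F.real (Ioc x (2 * x)) := hdropx
      _ ≤ F.real (Ioc x (x + ⌈x / h⌉₊ * h)) := measureReal_mono hcover
      _ ≤ ⌈x / h⌉₊ * (C * (f x)⁻¹) := measureReal_Ioc_add_mul_le F hh.le hwindow _
      _ ≤ (1 / h + 1) * x * (C * (f x)⁻¹) := by gcongr
  rw [Real.norm_of_nonneg (by positivity), Real.norm_of_nonneg hx0.le, mul_assoc,
    le_inv_mul_iff₀ hc]
  calc c * (f x * rtail F x) = c * rtail F x * f x := by ring
    _ ≤ (1 / h + 1) * x * (C * (f x)⁻¹) * f x := by gcongr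
    _ = (1 / h + 1) * C * x := by field_simp

end Window

section SupWindow

variable {F : Measure ℝ} {f : ℝ → ℝ} {h α a γ : ℝ}

lemma exists_restrict_Ioi_Ioc_le [IsFiniteMeasure F] (hf : RegVary f a)
    (hmono : MonotoneOn f (Ioi 0)) (haγ : a < γ)
    (hwin : (fun x => F.real (Ioc x (x + h))) =O[atTop] fun x => (f x)⁻¹) :
    ∃ C > 0, ∀ᶠ z in atTop, ∀ x ≥ z, ∀ s,
      F.restrict (Ioi z) (Ioc s (s + h)) ≤ ENNReal.ofReal (C * (x / z) ^ γ * (f x)⁻¹) := by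
  obtain ⟨C₁, hC₁, hC₁win⟩ := hwin.exists_pos
  obtain ⟨C₂, hC₂, hpotter⟩ := hf.potter_bound hmono haγ
  have hhalf : Tendsto (fun z : ℝ => z / 2) atTop atTop := tendsto_id.atTop_div_const two_pos
  refine ⟨C₁ * (C₂ * 2 ^ γ), by positivity, ?_⟩
  filter_upwards [hhalf.eventually (eventually_forall_ge_atTop.2 hC₁win.bound),
    hhalf.eventually hpotter, eventually_ge_atTop (2 * h), eventually_gt_atTop 0]
    with z hwinz hpotterz hzh hz x hzx s
  rw [Measure.restrict_apply measurableSet_Ioc]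
  rcases lt_or_ge s (z / 2) with hs | hs
  · rw [Ioc_inter_Ioi, Ioc_eq_empty_of_le (le_max_of_le_right (by linarith)), measure_empty]
    exact zero_le
  have hz2 : 0 < z / 2 := half_pos hz
  have hfx := hf.1 x (hz.trans_le hzx)
  have hfz := hf.1 _ hz2
  have hfs := hf.1 s (hz2.trans_le hs)
  have hinv : (f (z / 2))⁻¹ ≤ C₂ * 2 ^ γ * (x / z) ^ γ * (f x)⁻¹ := by
    rw [← div_eq_mul_inv, le_div_iff₀ hfx, inv_mul_le_iff₀ hfz]
    refine (hpotterz x (by linarith)).trans_eq ?_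
    rw [div_div_eq_mul_div, mul_div_right_comm,
      Real.mul_rpow (div_nonneg (hz.trans_le hzx).le hz.le) two_pos.le]
    ring
  refine (measure_mono inter_subset_left).trans ?_
  rw [← ofReal_measureReal]
  refine ENNReal.ofReal_le_ofReal ?_
  calc F.real (Ioc s (s + h)) ≤ C₁ * (f s)⁻¹ := by
        rw [← Real.norm_of_nonneg (inv_pos.2 hfs).le]
        exact (Real.le_norm_self _).trans (hwinz s hs)
    _ ≤ C₁ * (f (z / 2))⁻¹ := by
        gcongr
        exact hmono hz2 (hz2.trans_le hs) hs
    _ ≤ C₁ * (C₂ * 2 ^ γ * (x / z) ^ γ * (f x)⁻¹) := by gcongr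
    _ = C₁ * (C₂ * 2 ^ γ) * (x / z) ^ γ * (f x)⁻¹ := by ring

lemma RegVary.exists_truncMgf_le [IsProbabilityMeasure F]
    (hF : RegVary (fun x => (rtail F x)⁻¹) α) (hα : α < 1) (hαγ : α < γ) {K : ℝ} (hK : 0 < K) :
    ∃ C > 0, ∀ᶠ z in atTop, ∀ x ≥ z,
      truncMgf F (K / z) z ≤ ENNReal.ofReal (Real.exp (C * (x / z) ^ γ * rtail F x)) := by
  obtain ⟨ρ, hαρ, hρ⟩ := exists_between hα
  have := sub_pos.2 hρ
  obtain ⟨A, hA, htail⟩ := hF.rtail_le_mul_rpow hαρ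
  obtain ⟨B, hB, hpotter⟩ := hF.rtail_potter_bound hαγ
  refine ⟨K * Real.exp K / (1 - ρ) * A * B, by positivity, ?_⟩
  filter_upwards [htail, hpotter, eventually_gt_atTop 0] with z htailz hpotterz hz x hzx
  have hmgf := truncMgf_le_of_rtail_le F (div_pos hK hz).le hz hρ
    (mul_pos hA (hF.rtail_pos hz)).le htailz
  rw [div_mul_cancel₀ K hz.ne'] at hmgf
  refine hmgf.trans (ENNReal.ofReal_le_ofReal (Real.exp_le_exp.2 ?_))
  calc K * Real.exp K / (1 - ρ) * (A * rtail F z)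
      ≤ K * Real.exp K / (1 - ρ) * (A * (B * rtail F x * (x / z) ^ γ)) := by
        gcongr
        exact hpotterz x hzx
    _ = K * Real.exp K / (1 - ρ) * A * B * (x / z) ^ γ * rtail F x := by ring

/-- `sup_{t ≥ x} F^{*n}((t, t + h])`, the local mass that is summed over `n`. The masses are at
most `1`, so the real-valued `sSup` is a genuine supremum. -/
def supWindow (F : Measure ℝ) (h : ℝ) (n : ℕ) (x : ℝ) : ℝ :=
  sSup ((fun t => (convPow F n (Ioc t (t + h))).toReal) '' Ici x)

lemma supWindow_nonneg (F : Measure ℝ) (h : ℝ) (n : ℕ) (x : ℝ) : 0 ≤ supWindow F h n x :=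
  Real.sSup_nonneg (forall_mem_image.2 fun _ _ => ENNReal.toReal_nonneg)

lemma supWindow_le [IsProbabilityMeasure F] {p b lam z x : ℝ} (hlam : 0 ≤ lam) (hp0 : 0 ≤ p)
    (hp : ∀ s, F.restrict (Ioi z) (Ioc s (s + h)) ≤ ENNReal.ofReal p)
    (hmgf : truncMgf F lam z ≤ ENNReal.ofReal (Real.exp b)) (n : ℕ) :
    supWindow F h n x ≤ n * p + Real.exp (n * b) * Real.exp (-(lam * x)) := by
  refine csSup_le (nonempty_Ici.image _) (forall_mem_image.2 fun t ht => ?_)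
  refine ENNReal.toReal_le_of_le_ofReal (by positivity) ?_
  calc convPow F n (Ioc t (t + h))
      ≤ n * ENNReal.ofReal p + truncMgf F lam z ^ n * ENNReal.ofReal (Real.exp (-(lam * t))) :=
        convPow_Ioc_le F hlam hp n t
    _ ≤ n * ENNReal.ofReal p +
          ENNReal.ofReal (Real.exp b) ^ n * ENNReal.ofReal (Real.exp (-(lam * x))) := by
        gcongr
        exact ht
    _ = ENNReal.ofReal (n * p + Real.exp (n * b) * Real.exp (-(lam * x))) := by
        rw [ENNReal.ofReal_add (by positivity) (by positivity), ENNReal.ofReal_mul n.cast_nonneg,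
          ENNReal.ofReal_natCast, ENNReal.ofReal_mul (Real.exp_pos _).le, Real.exp_nat_mul,
          ENNReal.ofReal_pow (Real.exp_pos _).le]

lemma tendsto_div_log_atTop : Tendsto (fun x : ℝ => x / Real.log x) atTop atTop := by
  have hlim : Tendsto (fun x : ℝ => Real.log x / x) atTop (nhdsWithin 0 (Ioi 0)) := by
    refine tendsto_nhdsWithin_iff.2 ⟨Real.isLittleO_log_id_atTop.tendsto_div_nhds_zero, ?_⟩
    filter_upwards [eventually_gt_atTop 1] with x hx
    exact div_pos (Real.log_pos hx) (one_pos.trans hx)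
  exact hlim.inv_tendsto_nhdsGT_zero.congr fun x => inv_div _ _

/-- The truncation level is `z = x / log x` and the exponential parameter `2 / (θ * z)`, for which
`exp (-(2 / (θ * z)) * (θ * x)) = x⁻²`. -/
theorem exists_supWindow_le [IsProbabilityMeasure F]
    (hF : RegVary (fun x => (rtail F x)⁻¹) α) (hα : α < 1) (hαγ : α < γ)
    (hf : RegVary f a) (hmono : MonotoneOn f (Ioi 0)) (haγ : a < γ)
    (hwin : (fun x => F.real (Ioc x (x + h))) =O[atTop] fun x => (f x)⁻¹)
    {θ : ℝ} (hθ : 0 < θ) :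
    ∃ C > 0, ∃ D > 0, ∀ᶠ x in atTop, ∀ n : ℕ,
      supWindow F h n (θ * x) ≤ n * (C * Real.log x ^ γ * (f x)⁻¹) +
        Real.exp (n * (D * Real.log x ^ γ * rtail F x)) * (x ^ 2)⁻¹ := by
  obtain ⟨C, hC, hjump⟩ := exists_restrict_Ioi_Ioc_le hf hmono haγ hwin
  obtain ⟨D, hD, hmgf⟩ := hF.exists_truncMgf_le hα hαγ (K := 2 / θ) (by positivity)
  refine ⟨C, hC, D, hD, ?_⟩
  filter_upwards [tendsto_div_log_atTop.eventually hjump, tendsto_div_log_atTop.eventually hmgf,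
    Real.tendsto_log_atTop.eventually_ge_atTop 1, eventually_gt_atTop 0]
    with x hjumpx hmgfx hlog hx n
  have : 0 < Real.log x := one_pos.trans_le hlog
  have hzx : x / Real.log x ≤ x := div_le_self hx.le hlog
  have hfx := hf.1 x hx
  have hexp : Real.exp (-(2 / θ / (x / Real.log x) * (θ * x))) = (x ^ 2)⁻¹ := by
    rw [show 2 / θ / (x / Real.log x) * (θ * x) = (2 : ℕ) * Real.log x by push_cast; field_simp,
      Real.exp_neg, Real.exp_nat_mul, Real.exp_log hx]
  have hbound := supWindow_le (x := θ * x) (by positivity) (by positivity) (hjumpx x hzx)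
    (hmgfx x hzx) n
  rwa [div_div_cancel₀ hx.ne', hexp] at hbound

lemma sum_range_ceil_le {L p q : ℝ} {s : ℕ → ℝ} (hp : 0 ≤ p) (hq : 0 ≤ q)
    (hs : ∀ n : ℕ, n < L → s n ≤ n * p + q) :
    ∑ n ∈ Finset.range ⌈L⌉₊, s n ≤ L ^ 2 * p + (|L| + 1) * q := by
  rcases le_or_gt L 0 with hL | hL
  · rw [Nat.ceil_eq_zero.2 hL, Finset.sum_range_zero]
    positivity
  obtain ⟨N, hN⟩ := Nat.exists_eq_succ_of_ne_zero (Nat.ceil_pos.2 hL).ne'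
  have hNL : (N : ℝ) < L := Nat.lt_ceil.1 (hN ▸ N.lt_succ_self)
  have hterm : ∀ n ∈ Finset.range N, s (n + 1) ≤ N * p + q := fun n hn => by
    have hnN : ((n + 1 : ℕ) : ℝ) ≤ N := Nat.cast_le.2 (Finset.mem_range.1 hn)
    refine (hs _ (hnN.trans_lt hNL)).trans ?_
    gcongr
  have hzero : s 0 ≤ q := by simpa using hs 0 (by simpa using hL)
  rw [hN, Finset.sum_range_succ']
  calc ∑ n ∈ Finset.range N, s (n + 1) + s 0 ≤ N * (N * p + q) + q := by
        refine add_le_add ?_ hzero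
        simpa only [Finset.card_range, nsmul_eq_mul] using Finset.sum_le_card_nsmul _ _ _ hterm
    _ = (N : ℝ) ^ 2 * p + (N + 1) * q := by ring
    _ ≤ L ^ 2 * p + (|L| + 1) * q := by
        gcongr
        exact hNL.le.trans (le_abs_self L)

lemma sum_range_ceil_le_exp {L p b q B : ℝ} {s : ℕ → ℝ} (hp : 0 ≤ p) (hb : 0 ≤ b) (hq : 0 ≤ q)
    (hLb : L * b ≤ B) (hs : ∀ n : ℕ, s n ≤ n * p + Real.exp (n * b) * q) :
    ∑ n ∈ Finset.range ⌈L⌉₊, s n ≤ L ^ 2 * p + (|L| + 1) * (Real.exp B * q) := by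
  refine sum_range_ceil_le hp (by positivity) fun n hn => (hs n).trans ?_
  gcongr
  exact (mul_le_mul_of_nonneg_right hn.le hb).trans hLb

theorem exists_sum_supWindow_le [IsProbabilityMeasure F]
    (hF : RegVary (fun x => (rtail F x)⁻¹) α) (hα : α < 1) (hαγ : α < γ)
    (hf : RegVary f a) (hmono : MonotoneOn f (Ioi 0)) (haγ : a < γ)
    (hwin : (fun x => F.real (Ioc x (x + h))) =O[atTop] fun x => (f x)⁻¹)
    {θ : ℝ} (hθ : 0 < θ) {L : ℝ → ℝ}
    (hL : (fun x => L x * Real.log x ^ γ * rtail F x) =O[atTop] fun _ => (1 : ℝ)) :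
    ∃ C E, ∀ᶠ x in atTop, ∑ n ∈ Finset.range ⌈L x⌉₊, supWindow F h n (θ * x) ≤
      C * (L x ^ 2 * (Real.log x ^ γ * (f x)⁻¹)) + E * ((|L x| + 1) * (x ^ 2)⁻¹) := by
  obtain ⟨C, hC, D, hD, hsup⟩ := exists_supWindow_le hF hα hαγ hf hmono haγ hwin hθ
  obtain ⟨E, hE⟩ := hL.bound
  refine ⟨C, Real.exp (D * E), ?_⟩
  filter_upwards [hsup, hE, eventually_gt_atTop 1] with x hsupx hEx hx
  have hx0 : 0 < x := one_pos.trans hx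
  have := Real.rpow_pos_of_pos (Real.log_pos hx) γ
  have := hf.1 x hx0
  have := hF.rtail_pos hx0
  have hLb : L x * (D * Real.log x ^ γ * rtail F x) ≤ D * E := by
    rw [norm_one, mul_one] at hEx
    calc L x * (D * Real.log x ^ γ * rtail F x) = D * (L x * Real.log x ^ γ * rtail F x) := by ring
      _ ≤ D * E := by
        gcongr
        exact (Real.le_norm_self _).trans hEx
  refine (sum_range_ceil_le_exp (by positivity) (by positivity) (by positivity) hLb
    hsupx).trans_eq ?_
  ring

end SupWindow

section Calibration

variable {F : Measure ℝ} {ℓ L M : ℝ → ℝ} {γ : ℝ}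

lemma RightTail.isBigO_rtail (hRT : RightTail F ℓ) (hℓ : ∀ x > 0, 0 < ℓ x) :
    rtail F =O[atTop] fun x => (ℓ x)⁻¹ := by
  refine ((hRT.isBigO_one ℝ).mul (isBigO_refl (fun x => (ℓ x)⁻¹) atTop)).congr' ?_ ?_
  · filter_upwards [eventually_gt_atTop 0] with x hx
    exact mul_inv_cancel_right₀ (hℓ x hx).ne' _
  · simp

lemma RightTail.isBigO_one [IsProbabilityMeasure F] (hRT : RightTail F ℓ) :
    (fun _ => (1 : ℝ)) =O[atTop] ℓ := by
  refine IsBigO.of_bound 2 ?_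
  filter_upwards [hRT.eventually (lt_mem_nhds one_half_lt_one)] with x hx
  have hF0 : 0 ≤ rtail F x := ENNReal.toReal_nonneg
  have hℓ0 : 0 < ℓ x := pos_of_mul_pos_right (one_half_pos.trans hx) hF0
  rw [norm_one, Real.norm_of_nonneg hℓ0.le]
  linarith [mul_le_of_le_one_left hℓ0.le (rtail_le_one F x)]

lemma isBigO_div_log_rpow (hM : M =O[atTop] fun x => x)
    (hL : L =O[atTop] fun x => ℓ x * √(M x / x) / Real.log x ^ γ) :
    L =O[atTop] fun x => ℓ x / Real.log x ^ γ := by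
  have hsqrt : (fun x => √(M x / x)) =O[atTop] fun _ => (1 : ℝ) := by
    obtain ⟨C, hC⟩ := hM.bound
    refine IsBigO.of_bound √C ?_
    filter_upwards [hC, eventually_gt_atTop 0] with x hx hx0
    rw [norm_one, mul_one, Real.norm_of_nonneg (Real.sqrt_nonneg _)]
    rw [Real.norm_of_nonneg hx0.le] at hx
    exact Real.sqrt_le_sqrt ((div_le_iff₀ hx0).2 ((Real.le_norm_self _).trans hx))
  refine hL.trans ?_
  simpa [div_eq_mul_inv, mul_right_comm] using
    (isBigO_refl (fun x => ℓ x / Real.log x ^ γ) atTop).mul hsqrt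

lemma isBigO_mul_log_rpow_mul_rtail (hRT : RightTail F ℓ) (hℓ : ∀ x > 0, 0 < ℓ x)
    (hL : L =O[atTop] fun x => ℓ x / Real.log x ^ γ) :
    (fun x => L x * Real.log x ^ γ * rtail F x) =O[atTop] fun _ => (1 : ℝ) := by
  refine ((hL.mul (isBigO_refl (fun x => Real.log x ^ γ) atTop)).mul
    (hRT.isBigO_rtail hℓ)).congr' EventuallyEq.rfl ?_
  filter_upwards [eventually_gt_atTop 1] with x hx
  have := (hℓ x (one_pos.trans hx)).ne'
  have := (Real.rpow_pos_of_pos (Real.log_pos hx) γ).ne'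
  field_simp

lemma tendsto_sq_mul_window (hRT : RightTail F ℓ) (hℓ : ∀ x > 0, 0 < ℓ x)
    (hM : ∀ x > 0, 0 < M x) (hγ : 0 < γ)
    (hL : L =O[atTop] fun x => ℓ x * √(M x / x) / Real.log x ^ γ) :
    Tendsto (fun x => x / ℓ x * (L x ^ 2 * (Real.log x ^ γ * (M x * (rtail F x)⁻¹)⁻¹)))
      atTop (nhds 0) := by
  have hlog : Tendsto (fun x : ℝ => Real.log x ^ (-γ)) atTop (nhds 0) :=
    (tendsto_rpow_neg_atTop hγ).comp Real.tendsto_log_atTop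
  refine IsBigO.trans_tendsto ?_ hlog
  refine (((isBigO_refl (fun x => x / ℓ x) atTop).mul ((hL.pow 2).mul
    ((isBigO_refl (fun x => Real.log x ^ γ / M x) atTop).mul
      (hRT.isBigO_rtail hℓ)))).congr' ?_ ?_)
  · refine Eventually.of_forall fun x => ?_
    simp only [mul_inv, inv_inv]
    ring
  · filter_upwards [eventually_gt_atTop 1] with x hx
    have hx0 : 0 < x := one_pos.trans hx
    have := hℓ x hx0
    have := hM x hx0
    have hlogx := Real.log_pos hx
    have := Real.rpow_pos_of_pos hlogx γ
    rw [div_pow, mul_pow, Real.sq_sqrt (by positivity), Real.rpow_neg hlogx.le]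
    field_simp

lemma tendsto_abs_add_one_mul_inv_sq [IsProbabilityMeasure F] (hRT : RightTail F ℓ)
    (hℓ : ∀ x > 0, 0 < ℓ x) (hγ : 0 ≤ γ) (hL : L =O[atTop] fun x => ℓ x / Real.log x ^ γ) :
    Tendsto (fun x => x / ℓ x * ((|L x| + 1) * (x ^ 2)⁻¹)) atTop (nhds 0) := by
  have hlog : (fun x => (Real.log x ^ γ)⁻¹) =O[atTop] fun _ => (1 : ℝ) := by
    refine IsBigO.of_bound 1 ?_
    filter_upwards [Real.tendsto_log_atTop.eventually_ge_atTop 1] with x hx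
    have hone_le := Real.one_le_rpow hx hγ
    rw [norm_one, mul_one, Real.norm_of_nonneg (by positivity)]
    exact inv_le_one_of_one_le₀ hone_le
  have hLℓ : L =O[atTop] ℓ := hL.trans <| by
    simpa only [div_eq_mul_inv, mul_one] using (isBigO_refl ℓ atTop).mul hlog
  refine IsBigO.trans_tendsto ?_ (tendsto_inv_atTop_zero (𝕜 := ℝ))
  refine ((isBigO_refl (fun x => x / ℓ x) atTop).mul ((hLℓ.abs_left.add hRT.isBigO_one).mul
    (isBigO_refl (fun x => (x ^ 2)⁻¹) atTop))).congr' EventuallyEq.rfl ?_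
  filter_upwards [eventually_gt_atTop 0] with x hx
  have := (hℓ x hx).ne'
  field_simp

end Calibration

end SRT

theorem L_prior_one_general (F : Measure ℝ) [IsProbabilityMeasure F] (α h : ℝ) (ℓ : ℝ → ℝ)
    (hα : α ∈ Set.Ioo 0 1) (hℓ : RegVary ℓ α) (hRT : RightTail F ℓ) (hh : 0 < h) (β : ℝ)
    (M : ℝ → ℝ) (hMmono : MonotoneOn M (Set.Ioi 0)) (hMreg : RegVary M β)
    (hω : (fun x => omegaFn F h x) =O[atTop] fun x => x / M x) (γ : ℝ) (hγ : α + β < γ)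
    (θ : ℝ) (hθ : 0 < θ) (L : ℝ → ℝ)
    (hL : L =O[atTop] fun x => ℓ x * √(M x / x) / Real.log x ^ γ) :
    Tendsto (fun x => x / ℓ x * ∑ n ∈ Finset.range ⌈L x⌉₊, supWindow F h n (θ * x))
      atTop (nhds 0) := by
  have hβ : 0 ≤ β := hMreg.exponent_nonneg hMmono
  have hγ0 : 0 < γ := by linarith [hα.1]
  have hF := hRT.regVary_inv_rtail hℓ
  have hf := hMreg.mul hF
  have hf_mono : MonotoneOn (fun x => M x * (rtail F x)⁻¹) (Ioi 0) :=
    hMmono.mul hF.monotoneOn_inv_rtail (fun x hx => (hMreg.1 x hx).le) fun x hx => (hF.1 x hx).le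
  have hwin := isBigO_window (fun x _ => hRT.rtail_pos x) hω
  have hM : M =O[atTop] fun x => x := by
    refine (isBigO_mul_rtail_of_window hh hα.1 hF hf.1 hf_mono hwin).congr_left fun x => ?_
    exact inv_mul_cancel_right₀ (hRT.rtail_pos x).ne' (M x)
  have hLℓ := isBigO_div_log_rpow hM hL
  obtain ⟨C, E, hsum⟩ := exists_sum_supWindow_le hF hα.2 (by linarith : α < γ) hf hf_mono
    (by linarith) hwin hθ (isBigO_mul_log_rpow_mul_rtail hRT hℓ.1 hLℓ)
  have hlim := ((tendsto_sq_mul_window hRT hℓ.1 hMreg.1 hγ0 hL).const_mul C).add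
    ((tendsto_abs_add_one_mul_inv_sq hRT hℓ.1 hγ0.le hLℓ).const_mul E)
  rw [mul_zero, mul_zero, add_zero] at hlim
  refine squeeze_zero' ?_ ?_ hlim
  · filter_upwards [eventually_gt_atTop 0] with x hx
    exact mul_nonneg (div_nonneg hx.le (hℓ.1 x hx).le)
      (Finset.sum_nonneg fun n _ => supWindow_nonneg F h n _)
  · filter_upwards [hsum, eventually_gt_atTop 0] with x hsumx hx
    have hxℓ : 0 ≤ x / ℓ x := div_nonneg hx.le (hℓ.1 x hx).le
    exact (mul_le_mul_of_nonneg_left hsumx hxℓ).trans_eq (by ring)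

/-- Proposition 1.4, part 1: a priori lower bound on the
cut-off `L`, logarithmic-growth case. -/
theorem L_prior_one
    (F : Measure ℝ) [IsProbabilityMeasure F] (α h : ℝ) (ℓ : ℝ → ℝ)
    (hα : α ∈ Set.Ioc (0:ℝ) (1/2)) (hℓ : RegVary ℓ α)
    (hRT : RightTail F ℓ) (hspan : SpanOK F h)
    (β : ℝ) (hβ : 1 - 2 * α ≤ β ∧ β ≤ 1)
    (M : ℝ → ℝ) (hMmono : MonotoneOn M (Set.Ioi 0)) (hMreg : RegVary M β)
    (hω : (fun x => omegaFn F h x) =O[atTop] fun x => x / M x)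
    (hMo : (fun x => x / M x) =o[atTop] fun x => ℓ x ^ 2)
    (γ : ℝ) (hγ : α + β < γ)
    (hg0 : (fun x => Real.log x ^ γ) =O[atTop] fun x => ℓ x * Real.sqrt (M x / x)) :
    ∀ θ > (0:ℝ), ∀ L : ℝ → ℝ, MonotoneOn L (Set.Ioi 0) → RegVaryAny L →
      ((fun x => L x) =O[atTop]
        fun x => ℓ x * Real.sqrt (M x / x) / Real.log x ^ γ) →
      Tendsto (fun x => (x / ℓ x) * ∑ n ∈ Finset.range ⌈L x⌉₊,
          sSup ((fun t => ((convPow F n) (Set.Ioc t (t + h))).toReal) ''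
            Set.Ici (θ * x)))
        atTop (nhds 0) := by
  intro θ hθ L _ _ hL
  exact L_prior_one_general F α h ℓ ⟨hα.1, hα.2.trans_lt one_half_lt_one⟩ hℓ hRT hspan.1 β M hMmono
    hMreg hω γ hγ θ hθ L hL
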